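/- In the first Weyl algebra A₁ = C⟨x,y⟩/(yx − xy − 1), the element f = y²x satisfies f = (1 + yx)·y, and x, y, and 1 + yx are atoms, so f admits factorizations into atoms of lengths 2 and 3; in particular A₁ is not half-factorial. -/

import Mathlib

/-- The defining relation `y·x ~ x·y + 1` of the first Weyl algebra, inside the free
algebra on two generators `x` (index `0`) and `y` (index `1`) over `ℂ`. -/
inductive weylRel : FreeAlgebra ℂ (Fin 2) → FreeAlgebra ℂ (Fin 2) → Prop
  | rel : weylRel (FreeAlgebra.ι ℂ 1 * FreeAlgebra.ι ℂ 0)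
      (FreeAlgebra.ι ℂ 0 * FreeAlgebra.ι ℂ 1 + 1)

/-- The first Weyl algebra `A₁ = ℂ⟨x, y⟩/(yx − xy − 1)`. -/
abbrev WeylA : Type := RingQuot weylRel

/-- The generator `x` of `A₁`. -/
noncomputable def wX : WeylA := RingQuot.mkAlgHom ℂ weylRel (FreeAlgebra.ι ℂ 0)

/-- The generator `y` of `A₁`. -/
noncomputable def wY : WeylA := RingQuot.mkAlgHom ℂ weylRel (FreeAlgebra.ι ℂ 1)

open Polynomial

theorem wY_mul_wX : wY * wX = wX * wY + 1 := by
  have h := RingQuot.mkAlgHom_rel ℂ weylRel.rel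
  simpa [wX, wY] using h

/-- Multiplication by `X` on normally ordered symbols `∑ fⱼ(X) Yʲ`. -/
noncomputable def symbolX : Module.End ℂ ℂ[X][X] := LinearMap.mulLeft ℂ (C X)

/-- The coefficientwise derivative `∂/∂X` on `ℂ[X][Y]`. -/
noncomputable def coeffDeriv : Module.End ℂ ℂ[X][X] :=
  Polynomial.lsum fun n => ((monomial n : ℂ[X] →ₗ[ℂ[X]] ℂ[X][X]).restrictScalars ℂ) ∘ₗ derivative

theorem coeffDeriv_monomial (n : ℕ) (f : ℂ[X]) :
    coeffDeriv (monomial n f) = monomial n (derivative f) := by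
  simp [coeffDeriv, sum_monomial_index]

theorem coeffDeriv_C (f : ℂ[X]) : coeffDeriv (C f) = C (derivative f) :=
  coeffDeriv_monomial 0 f

theorem coeffDeriv_one : coeffDeriv 1 = 0 := by
  simpa using coeffDeriv_C 1

theorem coeff_coeffDeriv (p : ℂ[X][X]) (n : ℕ) :
    (coeffDeriv p).coeff n = derivative (p.coeff n) := by
  induction p using Polynomial.induction_on' with
  | add p q hp hq => simp only [map_add, coeff_add, hp, hq]
  | monomial m f =>
    rw [coeffDeriv_monomial, coeff_monomial, coeff_monomial]
    split_ifs <;> simp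

theorem coeffDeriv_C_X_mul (p : ℂ[X][X]) :
    coeffDeriv (C X * p) = C X * coeffDeriv p + p := by
  ext1 n
  simp only [coeff_coeffDeriv, coeff_C_mul, coeff_add, derivative_mul, derivative_X]
  ring

/-- The operator `Y + ∂/∂X` on normally ordered symbols `∑ fⱼ(X) Yʲ`. -/
noncomputable def symbolY : Module.End ℂ ℂ[X][X] :=
  LinearMap.mulLeft ℂ X + coeffDeriv

theorem symbolX_apply (p : ℂ[X][X]) : symbolX p = C X * p := rfl

theorem symbolY_apply (p : ℂ[X][X]) :
    symbolY p = X * p + coeffDeriv p := rfl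

/-- The action of the Weyl algebra on normally ordered symbols that corresponds to left
multiplication. -/
noncomputable def weylAct : WeylA →ₐ[ℂ] Module.End ℂ ℂ[X][X] :=
  RingQuot.liftAlgHom ℂ ⟨FreeAlgebra.lift ℂ ![symbolX, symbolY], by
    rintro _ _ ⟨⟩
    refine LinearMap.ext fun p => ?_
    simp [symbolX_apply, symbolY_apply, coeffDeriv_C_X_mul]
    ring⟩

theorem weylAct_wX : weylAct wX = symbolX := by
  simp [weylAct, wX]

theorem weylAct_wY : weylAct wY = symbolY := by
  simp [weylAct, wY]

/-- The normally ordered element `∑ fⱼ(x) yʲ` with symbol `∑ fⱼ(X) Yʲ`. -/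
noncomputable def normalOrder : ℂ[X][X] →+ WeylA :=
  Polynomial.eval₂AddMonoidHom (aeval wX : ℂ[X] →ₐ[ℂ] WeylA).toRingHom wY

theorem normalOrder_monomial (n : ℕ) (f : ℂ[X]) :
    normalOrder (monomial n f) = aeval wX f * wY ^ n := by
  simp [normalOrder]

theorem normalOrder_C (f : ℂ[X]) : normalOrder (C f) = aeval wX f := by
  simp [normalOrder]

theorem wY_mul_aeval (f : ℂ[X]) :
    wY * aeval wX f = aeval wX f * wY + aeval wX (derivative f) := by
  induction f using Polynomial.induction_on' with
  | add p q hp hq => simp only [map_add, mul_add, add_mul, hp, hq]; abel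
  | monomial n c =>
    induction n with
    | zero => simp [Algebra.commutes]
    | succ n ih =>
      have h : (monomial (n + 1) c : ℂ[X]) = monomial n c * X := by simp
      rw [h, map_mul, ← mul_assoc, ih, derivative_mul, map_add, map_mul, aeval_X, derivative_X,
        mul_one, add_mul, mul_assoc, wY_mul_wX]
      noncomm_ring

theorem normalOrder_symbolX (p : ℂ[X][X]) : normalOrder (symbolX p) = wX * normalOrder p := by
  induction p using Polynomial.induction_on' with
  | add p q hp hq => simp only [map_add, mul_add, hp, hq]
  | monomial n f =>
    rw [symbolX_apply, C_mul_monomial, normalOrder_monomial, normalOrder_monomial, map_mul,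
      aeval_X, mul_assoc]

theorem normalOrder_symbolY (p : ℂ[X][X]) : normalOrder (symbolY p) = wY * normalOrder p := by
  induction p using Polynomial.induction_on' with
  | add p q hp hq => simp only [map_add, mul_add, hp, hq]
  | monomial n f =>
    rw [symbolY_apply, X_mul_monomial, coeffDeriv_monomial, map_add]
    simp only [normalOrder_monomial]
    rw [← mul_assoc, wY_mul_aeval, pow_succ', add_mul, mul_assoc]

theorem normalOrder_weylAct (a : WeylA) (p : ℂ[X][X]) :
    normalOrder (weylAct a p) = a * normalOrder p := by
  obtain ⟨a, rfl⟩ := RingQuot.mkAlgHom_surjective ℂ weylRel a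
  induction a using FreeAlgebra.induction generalizing p with
  | grade0 r =>
    have h : (algebraMap ℂ ℂ[X][X] r) = C (C r) := rfl
    simp only [AlgHom.commutes, Module.algebraMap_end_apply]
    rw [Algebra.smul_def, h]
    induction p using Polynomial.induction_on' with
    | add p q hp hq => simp only [map_add, mul_add, hp, hq]
    | monomial n f =>
      rw [C_mul_monomial, normalOrder_monomial, normalOrder_monomial, map_mul, aeval_C, mul_assoc]
  | grade1 i =>
    fin_cases i
    · change normalOrder (weylAct wX p) = wX * _
      rw [weylAct_wX, normalOrder_symbolX]
    · change normalOrder (weylAct wY p) = wY * _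
      rw [weylAct_wY, normalOrder_symbolY]
  | mul a b ha hb => rw [map_mul, map_mul, Module.End.mul_apply, ha, hb, mul_assoc]
  | add a b ha hb => rw [map_add, map_add, LinearMap.add_apply, map_add, ha, hb, add_mul]

/-- The normally ordered symbol of an element of the Weyl algebra. -/
noncomputable def weylSymbol (a : WeylA) : ℂ[X][X] := weylAct a 1

theorem normalOrder_weylSymbol (a : WeylA) : normalOrder (weylSymbol a) = a := by
  rw [weylSymbol, normalOrder_weylAct]
  simp [normalOrder]

theorem weylSymbol_mul (a b : WeylA) : weylSymbol (a * b) = weylAct a (weylSymbol b) := by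
  simp [weylSymbol]

theorem weylAct_aeval (f : ℂ[X]) (q : ℂ[X][X]) : weylAct (aeval wX f) q = C f * q := by
  induction f using Polynomial.induction_on' generalizing q with
  | add f g hf hg => simp only [map_add, LinearMap.add_apply, hf, hg, add_mul]
  | monomial n c =>
    induction n generalizing q with
    | zero =>
      rw [monomial_zero_left, aeval_C, AlgHom.commutes, Module.algebraMap_end_apply,
        Algebra.smul_def]
      rfl
    | succ n ih =>
      have h : (monomial (n + 1) c : ℂ[X]) = monomial n c * X := by simp
      rw [h, map_mul, map_mul, aeval_X, weylAct_wX, Module.End.mul_apply, ih, symbolX_apply, C_mul,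
        mul_assoc]

theorem weylAct_eq_sum (a : WeylA) (q : ℂ[X][X]) :
    weylAct a q = ∑ n ∈ (weylSymbol a).support, C ((weylSymbol a).coeff n) * (symbolY ^ n) q := by
  conv_lhs => rw [← normalOrder_weylSymbol a]
  simp [normalOrder, eval₂_eq_sum, Polynomial.sum, weylAct_aeval, weylAct_wY]

theorem symbolY_pow_sub_mem (q : ℂ[X][X]) (n : ℕ) :
    (symbolY ^ n) q - X ^ n * q ∈ degreeLT ℂ[X] (n + q.natDegree) := by
  induction n with
  | zero => simp
  | succ n ih =>
    set r := (symbolY ^ n) q with hr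
    have h : (symbolY ^ (n + 1)) q - X ^ (n + 1) * q =
        X * (r - X ^ n * q) + coeffDeriv r := by
      rw [pow_succ', Module.End.mul_apply, symbolY_apply]
      ring
    have hc : ∀ m, n + q.natDegree ≤ m → (r - X ^ n * q).coeff m = 0 := by
      rw [mem_degreeLT] at ih
      intro m hm
      exact coeff_eq_zero_of_degree_lt (ih.trans_le (by exact_mod_cast hm))
    rw [h, mem_degreeLT, degree_lt_iff_coeff_zero]
    intro m hm
    obtain ⟨m, rfl⟩ : ∃ k, m = k + 1 := ⟨m - 1, by omega⟩
    have hz : r.coeff (m + 1) = 0 := by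
      have h1 := hc (m + 1) (by omega)
      have h2 : (X ^ n * q).coeff (m + 1) = 0 := by
        rw [show m + 1 = (m + 1 - n) + n by omega, coeff_X_pow_mul]
        exact coeff_eq_zero_of_natDegree_lt (by omega)
      rwa [coeff_sub, h2, sub_zero] at h1
    rw [coeff_add, coeff_X_mul, hc m (by omega), coeff_coeffDeriv, hz, map_zero, add_zero]

theorem weylAct_sub_mem (a : WeylA) (q : ℂ[X][X]) :
    weylAct a q - weylSymbol a * q ∈
      degreeLT ℂ[X] ((weylSymbol a).natDegree + q.natDegree) := by
  have h : weylAct a q - weylSymbol a * q = ∑ n ∈ (weylSymbol a).support,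
      (weylSymbol a).coeff n • ((symbolY ^ n) q - X ^ n * q) := by
    have e := congrArg (· * q) (weylSymbol a).as_sum_support_C_mul_X_pow
    simp only [Finset.sum_mul, mul_assoc] at e
    rw [weylAct_eq_sum, e, ← Finset.sum_sub_distrib]
    simp only [smul_eq_C_mul, mul_sub]
  rw [h]
  refine Submodule.sum_mem _ fun n hn => Submodule.smul_mem _ _ ?_
  exact degreeLT_mono (by have := le_natDegree_of_mem_supp n hn; omega) (symbolY_pow_sub_mem q n)

theorem natDegree_weylSymbol_mul {a b : WeylA} (ha : weylSymbol a ≠ 0) (hb : weylSymbol b ≠ 0) :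
    (weylSymbol (a * b)).natDegree = (weylSymbol a).natDegree + (weylSymbol b).natDegree := by
  have h := weylAct_sub_mem a (weylSymbol b)
  rw [← weylSymbol_mul, mem_degreeLT] at h
  have hd : (weylSymbol a * weylSymbol b).degree =
      (((weylSymbol a).natDegree + (weylSymbol b).natDegree : ℕ) : WithBot ℕ) := by
    rw [degree_eq_natDegree (mul_ne_zero ha hb), natDegree_mul ha hb]
  rw [← hd] at h
  have h2 := degree_add_eq_right_of_degree_lt h
  rw [sub_add_cancel] at h2
  rw [natDegree_eq_of_degree_eq h2, natDegree_mul ha hb]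

theorem weylSymbol_ne_zero {a : WeylA} (ha : a ≠ 0) : weylSymbol a ≠ 0 := fun h =>
  ha (by rw [← normalOrder_weylSymbol a, h, map_zero])

theorem weylSymbol_zero : weylSymbol 0 = 0 := by simp [weylSymbol]

theorem weylSymbol_one : weylSymbol 1 = 1 := by simp [weylSymbol]

theorem weylSymbol_wX : weylSymbol wX = C X := by
  simp [weylSymbol, weylAct_wX, symbolX_apply]

theorem weylSymbol_wY : weylSymbol wY = X := by
  simp [weylSymbol, weylAct_wY, symbolY_apply, coeffDeriv_one]

theorem weylSymbol_one_add_wY_mul_wX : weylSymbol (1 + wY * wX) = C X * X + C (C 2) := by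
  simp [weylSymbol, weylAct_wX, weylAct_wY, symbolX_apply, symbolY_apply, coeffDeriv_C]
  rw [← one_add_one_eq_two, C_add, C_add, C_1, C_1]
  ring

theorem isUnit_of_weylSymbol_eq_C {a : WeylA} {f : ℂ[X]} (h : weylSymbol a = C f)
    (hf : IsUnit f) : IsUnit a := by
  rw [← normalOrder_weylSymbol a, h, normalOrder_C]
  exact hf.map (aeval wX)

theorem weylSymbol_mul_of_left_eq_C {a b : WeylA} {f : ℂ[X]} (h : weylSymbol a = C f) :
    weylSymbol (a * b) = C f * weylSymbol b := by
  rw [weylSymbol_mul, ← normalOrder_weylSymbol a, h, normalOrder_C, weylAct_aeval]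

theorem weylSymbol_mul_of_linear {a b : WeylA} {f g h : ℂ[X]} (ha : weylSymbol a = C f * X + C g)
    (hb : weylSymbol b = C h) :
    weylSymbol (a * b) = C (f * h) * X + C (f * derivative h + g * h) := by
  have e : weylSymbol a = monomial 1 f + C g := by rw [ha, ← C_mul_X_eq_monomial]
  rw [weylSymbol_mul, ← normalOrder_weylSymbol a, e, map_add, normalOrder_C, normalOrder_monomial,
    hb, pow_one, map_add, map_mul, LinearMap.add_apply, Module.End.mul_apply, weylAct_aeval,
    weylAct_aeval, weylAct_wY, symbolY_apply, coeffDeriv_C]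
  simp
  ring

theorem natDegree_add_of_mul_eq {a b w : WeylA} (hw : weylSymbol w ≠ 0) (h : w = a * b) :
    (weylSymbol w).natDegree = (weylSymbol a).natDegree + (weylSymbol b).natDegree := by
  subst h
  refine natDegree_weylSymbol_mul (weylSymbol_ne_zero ?_) (weylSymbol_ne_zero ?_)
  · rintro rfl
    exact hw (by rw [zero_mul, weylSymbol_zero])
  · rintro rfl
    exact hw (by rw [mul_zero, weylSymbol_zero])

theorem not_isUnit_of_natDegree_weylSymbol_pos {w : WeylA} (hw : 0 < (weylSymbol w).natDegree) :
    ¬ IsUnit w := by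
  rintro ⟨u, rfl⟩
  have h := natDegree_add_of_mul_eq (w := 1) (by rw [weylSymbol_one]; exact one_ne_zero)
    u.mul_inv.symm
  rw [weylSymbol_one, natDegree_one] at h
  omega

theorem irreducible_wX : Irreducible wX := by
  refine ⟨?_, fun a b hab => ?_⟩
  · rintro ⟨u, hu⟩
    have h := weylSymbol_mul_of_left_eq_C (b := (↑u⁻¹ : WeylA)) weylSymbol_wX
    rw [← hu, u.mul_inv, weylSymbol_one] at h
    exact not_isUnit_X (isUnit_C.mp (IsUnit.of_mul_eq_one _ h.symm))
  · have hd := natDegree_add_of_mul_eq (by simp [weylSymbol_wX]) hab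
    rw [weylSymbol_wX, natDegree_C] at hd
    obtain ⟨f, hf⟩ := natDegree_eq_zero.mp (show (weylSymbol a).natDegree = 0 by omega)
    obtain ⟨g, hg⟩ := natDegree_eq_zero.mp (show (weylSymbol b).natDegree = 0 by omega)
    have h := weylSymbol_mul_of_left_eq_C (b := b) hf.symm
    rw [← hab, weylSymbol_wX, ← hg, ← C_mul] at h
    exact (irreducible_X.isUnit_or_isUnit (C_injective h)).imp
      (isUnit_of_weylSymbol_eq_C hf.symm) (isUnit_of_weylSymbol_eq_C hg.symm)

/-- An element whose symbol is `f Y + g` is irreducible as soon as all its factorizations with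
a factor of symbol in `ℂ[X]` are trivial. -/
theorem irreducible_of_weylSymbol_eq_linear {w : WeylA} {u v : ℂ[X]} (hu : u ≠ 0)
    (hw : weylSymbol w = C u * X + C v)
    (hl : ∀ f g h : ℂ[X], u = h * f → v = h * g → IsUnit h)
    (hr : ∀ f g h : ℂ[X], u = f * h → v = f * derivative h + g * h → IsUnit h) :
    Irreducible w := by
  have hdw : (weylSymbol w).natDegree = 1 := by rw [hw, natDegree_linear hu]
  have hw0 : weylSymbol w ≠ 0 := by
    intro h
    simp [h] at hdw
  have hcoeff : ∀ {u v u' v' : ℂ[X]}, C u * X + C v = C u' * X + C v' → u = u' ∧ v = v' := by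
    intro u v u' v' h
    have h0 := congrArg (fun p => coeff p 0) h
    have h1 := congrArg (fun p => coeff p 1) h
    simp at h0
    simp [coeff_C] at h1
    exact ⟨h1, h0⟩
  refine ⟨not_isUnit_of_natDegree_weylSymbol_pos (by omega), fun a b hab => ?_⟩
  have hd := natDegree_add_of_mul_eq hw0 hab
  rw [hdw] at hd
  rcases (show (weylSymbol a).natDegree = 0 ∧ (weylSymbol b).natDegree ≤ 1 ∨
    (weylSymbol b).natDegree = 0 ∧ (weylSymbol a).natDegree ≤ 1 by omega) with ⟨h0, h1⟩ | ⟨h0, h1⟩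
  · obtain ⟨h, hh⟩ := natDegree_eq_zero.mp h0
    obtain ⟨f, g, hfg⟩ := exists_eq_X_add_C_of_natDegree_le_one h1
    have e := weylSymbol_mul_of_left_eq_C (b := b) hh.symm
    rw [← hab, hw, hfg, mul_add, ← mul_assoc, ← C_mul, ← C_mul] at e
    obtain ⟨e1, e2⟩ := hcoeff e
    exact Or.inl (isUnit_of_weylSymbol_eq_C hh.symm (hl f g h e1 e2))
  · obtain ⟨h, hh⟩ := natDegree_eq_zero.mp h0
    obtain ⟨f, g, hfg⟩ := exists_eq_X_add_C_of_natDegree_le_one h1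
    have e := weylSymbol_mul_of_linear hfg hh.symm
    rw [← hab, hw] at e
    obtain ⟨e1, e2⟩ := hcoeff e
    exact Or.inr (isUnit_of_weylSymbol_eq_C hh.symm (hr f g h e1 e2))

theorem irreducible_wY : Irreducible wY := by
  refine irreducible_of_weylSymbol_eq_linear (u := 1) (v := 0) one_ne_zero
    (by simp [weylSymbol_wY]) ?_ ?_
  · intro f _ h e _
    exact IsUnit.of_mul_eq_one f e.symm
  · intro f _ h e _
    exact IsUnit.of_mul_eq_one f (by rw [mul_comm, ← e])

theorem irreducible_one_add_wY_mul_wX : Irreducible (1 + wY * wX) := by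
  have h2 : IsUnit (C 2 : ℂ[X]) := isUnit_C.mpr (by norm_num)
  refine irreducible_of_weylSymbol_eq_linear X_ne_zero weylSymbol_one_add_wY_mul_wX ?_ ?_
  · intro _ g h _ e
    exact isUnit_of_dvd_unit ⟨g, e⟩ h2
  · intro f g h e1 e2
    refine (irreducible_X.isUnit_or_isUnit e1).elim (fun hf => ?_) id
    obtain ⟨c, hc, rfl⟩ := isUnit_iff.mp hf
    have d := congrArg (fun p => eval 0 p) (congrArg derivative e1)
    have e := congrArg (fun p => eval 0 p) e1
    have e' := congrArg (fun p => eval 0 p) e2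
    simp at d e e'
    rcases e with e | e
    · simp [e] at d
    · rw [← d, e] at e'
      norm_num at e'

/-- In the first Weyl algebra `A₁`, the element `f = y²x` satisfies
`f = (1 + yx)·y`, and `x`, `y`, `1 + yx` are atoms; so `f` has factorizations into
atoms of lengths `2` and `3`, and in particular `A₁` is not half-factorial. -/
theorem stmt_18 :
    wY ^ 2 * wX = (1 + wY * wX) * wY ∧
    Irreducible wX ∧ Irreducible wY ∧ Irreducible (1 + wY * wX) ∧
    ¬ (∀ l₁ l₂ : List WeylA, (∀ z ∈ l₁, Irreducible z) → (∀ z ∈ l₂, Irreducible z) →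
        l₁.prod = l₂.prod → l₁.length = l₂.length) := by
  have hf : wY ^ 2 * wX = (1 + wY * wX) * wY := by
    rw [pow_two, mul_assoc, wY_mul_wX, mul_add, ← mul_assoc, wY_mul_wX]
    noncomm_ring
  refine ⟨hf, irreducible_wX, irreducible_wY, irreducible_one_add_wY_mul_wX, fun H => ?_⟩
  have h := H [wY, wY, wX] [1 + wY * wX, wY]
    (by simp [irreducible_wX, irreducible_wY])
    (by simp [irreducible_wY, irreducible_one_add_wY_mul_wX])
    (by simpa [pow_two, mul_assoc] using hf)
  simp at h
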